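/- Let μ be an ergodic process on Σ = 𝒜^{ℤ_{≥0}^d} with entropy rate h(μ) = h, and let δ > 0, δ′ > 0, β ∈ (0,1]. Then there is k_0 = k_0(δ,δ′) such that for every k ≥ k_0 there exists a set 𝒯_k ⊆ Σ^k (independent of x) with log|𝒯_k| / k^d ≤ h + δ, such that for μ-almost every x there is n_0 = n_0(x,k,δ,δ′) with the following property for all n ≥ n_0: for every collection λ_1, …, λ_I of pairwise non-overlapping translates of Λ_k contained in Λ_n whose union Ξ satisfies |Ξ| ≥ β·n^d, the words w_i = x(λ_i) belong to 𝒯_k for at least a (1−δ′)-fraction of the indices i ∈ {1,…,I}. -/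

import Mathlib

open MeasureTheory Filter Topology

namespace SRU1408

/-- A site of the lattice `ℤ_{≥0}^d`. -/
abbrev Site (d : ℕ) := Fin d → ℕ

/-- An infinite array over the alphabet `Fin A`, i.e. an element of `Σ = 𝒜^{ℤ_{≥0}^d}`. -/
abbrev Config (A d : ℕ) := Site d → Fin A

/-- A cubical `k`-word, i.e. an element of `Σ^k = 𝒜^{Λ_k}`. -/
abbrev Word (A d k : ℕ) := (Fin d → Fin k) → Fin A

variable {A d : ℕ}

/-- The pattern of `x` on the cube `Λ_k + c`, as a `k`-word. -/
def wordAt (x : Config A d) (k : ℕ) (c : Site d) : Word A d k :=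
  fun i => x fun j => c j + (i j : ℕ)

/-- The lattice shift `σ_r`. -/
def shift (r : Site d) (x : Config A d) : Config A d := fun i => x (i + r)

/-- Stationarity: invariance under all shifts. -/
def Stationary (μ : Measure (Config A d)) : Prop := ∀ r : Site d, μ.map (shift r) = μ

/-- Ergodicity: stationary, and every measurable set invariant under all shifts is trivial. -/
def ErgodicShift (μ : Measure (Config A d)) : Prop :=
  Stationary μ ∧ ∀ E : Set (Config A d), MeasurableSet E →
    (∀ r : Site d, shift r ⁻¹' E = E) → μ E = 0 ∨ μ E = 1

/-- The `k`-word marginal distribution `μ^k`, as a probability vector on `Σ^k`. -/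
noncomputable def wordDist (μ : Measure (Config A d)) (k : ℕ) : Word A d k → ℝ :=
  fun w => (μ {x | wordAt x k 0 = w}).toReal

/-- Base-`A` entropy of a probability vector. -/
noncomputable def entH (A : ℕ) {W : Type*} [Fintype W] (p : W → ℝ) : ℝ :=
  -∑ w, p w * Real.logb A (p w)

/-- `μ` has entropy rate `h` (base-`A` logarithms): `H(μ^n)/n^d → h`. -/
def HasEntropyRate (μ : Measure (Config A d)) (h : ℝ) : Prop :=
  Tendsto (fun n : ℕ => entH A (wordDist μ n) / (n : ℝ) ^ d) atTop (𝓝 h)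

/-!
Code the words of a fixed large cube `Λ_m` so well that the mean code length `H` satisfies
`(1 + H) / m ^ d < h + δ`. By the mean ergodic theorem some convex combination of translates of
the code length is `L¹`-close to `H`; let `φ ≥ 0` be the distance. Call a `k`-word typical if it
extends to a configuration whose `φ`-average over `Λ_k` is at most `1`.

Typical words are few: the code lengths along all `m`-cubes of a typical word sum to at most about
`(1 + H) k ^ d`, so one of the `m ^ d` grids of disjoint `m`-cubes carries total code length at
most `(1 + H) k ^ d / m ^ d`, and Kraft's inequality bounds the number of such words.

Typical words are frequent: by a maximal inequality and ergodicity, the averages of `φ` over `Λ_n`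
are almost surely eventually at most about `6 ^ d ∫ φ`, which is as small as we like. Every
atypical cube of a packing contributes more than `k ^ d` to the sum of `φ` over `Λ_n`, so there are
few of them. Weak control of the averages by `∫ φ` thus replaces the pointwise ergodic theorem.
-/

open scoped ENNReal

section Shift

theorem shift_shift (r s : Site d) (x : Config A d) : shift r (shift s x) = shift (r + s) x := by
  funext i
  simp only [shift, add_assoc]

theorem measurable_shift (r : Site d) : Measurable (shift r : Config A d → Config A d) :=
  measurable_pi_lambda _ fun i => measurable_pi_apply (i + r)

theorem Stationary.measurePreserving {μ : Measure (Config A d)} (hμ : Stationary μ)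
    (r : Site d) : MeasurePreserving (shift r) μ μ :=
  ⟨measurable_shift r, hμ r⟩

theorem ErgodicShift.measure_eq_zero_or_one {μ : Measure (Config A d)} [IsFiniteMeasure μ]
    (hμ : ErgodicShift μ) {E : Set (Config A d)} (hE : MeasurableSet E)
    (hinv : ∀ r : Site d, shift r ⁻¹' E ≤ᵐ[μ] E) : μ E = 0 ∨ μ E = 1 := by
  have heq (r : Site d) : shift r ⁻¹' E =ᵐ[μ] E :=
    ae_eq_of_ae_subset_of_measure_ge (hinv r)
      ((hμ.1.measurePreserving r).measure_preimage hE.nullMeasurableSet).ge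
      (measurable_shift r hE).nullMeasurableSet (measure_ne_top _ _)
  -- The points whose orbit eventually stays in `E` form a strictly invariant version of `E`.
  let E' : Set (Config A d) := ⋃ r : Site d, ⋂ t : Site d, shift (r + t) ⁻¹' E
  have hE'meas : MeasurableSet E' :=
    MeasurableSet.iUnion fun r => MeasurableSet.iInter fun t => measurable_shift _ hE
  have hE'E : E' =ᵐ[μ] E := by
    refine eventuallyEq_set.2 ?_
    filter_upwards [ae_all_iff.2 fun r => (heq r).mem_iff] with x hx
    simp only [Set.mem_preimage] at hx
    simp [E', hx]
  rw [← measure_congr hE'E]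
  refine hμ.2 E' hE'meas fun u => ?_
  ext x
  simp only [E', Set.mem_preimage, Set.mem_iUnion, Set.mem_iInter, shift_shift]
  constructor
  · rintro ⟨r, hr⟩
    exact ⟨r + u, fun t => by simpa only [add_right_comm] using hr t⟩
  · rintro ⟨r, hr⟩
    exact ⟨r, fun t => by simpa only [add_assoc] using hr (t + u)⟩

theorem ErgodicShift.ae_eq_const {μ : Measure (Config A d)} [IsProbabilityMeasure μ]
    (hμ : ErgodicShift μ) {β : Type*} [MeasurableSpace β]
    [MeasurableSpace.CountablySeparated β] [Nonempty β] {v : Config A d → β} (hv : Measurable v)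
    (hinv : ∀ r : Site d, v ∘ shift r =ᵐ[μ] v) : ∃ κ : β, v =ᵐ[μ] fun _ => κ := by
  refine exists_eventuallyEq_const_of_forall_separating MeasurableSet fun U hU => ?_
  have hpre (r : Site d) : shift r ⁻¹' (v ⁻¹' U) ≤ᵐ[μ] v ⁻¹' U :=
    ((hinv r).preimage U).le
  rcases hμ.measure_eq_zero_or_one (hv hU) hpre with h | h
  · exact Or.inr (measure_eq_zero_iff_ae_notMem.1 h)
  · exact Or.inl ((mem_ae_iff_prob_eq_one (hv hU)).2 h)

end Shift

section FixedPoint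

variable {E : Type*} [NormedAddCommGroup E] [InnerProductSpace ℝ E]

-- The fixed point is the element of minimal norm, which is unique.
theorem exists_mem_forall_contraction_fixed [CompleteSpace E] {K : Set E} (hne : K.Nonempty)
    (hclosed : IsClosed K) (hconv : Convex ℝ K) :
    ∃ v ∈ K, ∀ U : E → E, Set.MapsTo U K K → (∀ w, ‖U w‖ ≤ ‖w‖) → U v = v := by
  obtain ⟨v, hvK, hmin⟩ :=
    exists_norm_eq_iInf_of_complete_convex hne hclosed.isComplete hconv 0
  rw [norm_eq_iInf_iff_real_inner_le_zero hconv hvK] at hmin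
  refine ⟨v, hvK, fun U hUK hU => sub_eq_zero.1 (norm_eq_zero.1 ?_)⟩
  have hinner : ‖v‖ ^ 2 ≤ inner ℝ (U v) v := by
    have := hmin (U v) (hUK hvK)
    rw [zero_sub, inner_neg_left, inner_sub_right, real_inner_self_eq_norm_sq,
      real_inner_comm] at this
    linarith
  have hnorm : ‖U v‖ ^ 2 ≤ ‖v‖ ^ 2 := by gcongr; exact hU v
  have hexpand := norm_sub_sq_real (U v) v
  exact pow_eq_zero_iff two_ne_zero |>.1 (le_antisymm (by linarith) (sq_nonneg _))

theorem mapsTo_closedConvexHull {F : Type*} [AddCommGroup F] [Module ℝ F] [TopologicalSpace F]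
    [ContinuousAdd F] [ContinuousConstSMul ℝ F] (U : F →L[ℝ] F) {S : Set F}
    (hU : Set.MapsTo U S S) : Set.MapsTo U (closedConvexHull ℝ S) (closedConvexHull ℝ S) :=
  closedConvexHull_min (fun _ hx => subset_closedConvexHull (hU hx))
    (convex_closedConvexHull.linear_preimage U.toLinearMap)
    (isClosed_closedConvexHull.preimage U.continuous)

end FixedPoint

section MeanErgodic

variable {μ : Measure (Config A d)}

/-- The Koopman isometry `F ↦ F ∘ σ_r` of `L²(μ)`. -/
noncomputable def Stationary.koopman (hμ : Stationary μ) (r : Site d) :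
    Lp ℝ 2 μ →ₗᵢ[ℝ] Lp ℝ 2 μ :=
  Lp.compMeasurePreservingₗᵢ ℝ (shift r) (hμ.measurePreserving r)

theorem Stationary.coeFn_koopman (hμ : Stationary μ) (r : Site d) (F : Lp ℝ 2 μ) :
    hμ.koopman r F =ᵐ[μ] F ∘ shift r :=
  Lp.coeFn_compMeasurePreserving F (hμ.measurePreserving r)

theorem Stationary.koopman_koopman (hμ : Stationary μ) (r s : Site d) (F : Lp ℝ 2 μ) :
    hμ.koopman r (hμ.koopman s F) = hμ.koopman (s + r) F := by
  refine Lp.ext ?_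
  calc hμ.koopman r (hμ.koopman s F) =ᵐ[μ] hμ.koopman s F ∘ shift r := hμ.coeFn_koopman r _
    _ =ᵐ[μ] (F ∘ shift s) ∘ shift r :=
        (hμ.measurePreserving r).quasiMeasurePreserving.ae_eq_comp (hμ.coeFn_koopman s F)
    _ = F ∘ shift (s + r) := funext fun x => congrArg F (shift_shift s r x)
    _ =ᵐ[μ] hμ.koopman (s + r) F := (hμ.coeFn_koopman (s + r) F).symm

theorem Stationary.integral_koopman (hμ : Stationary μ) (r : Site d) (F : Lp ℝ 2 μ) :
    ∫ x, hμ.koopman r F x ∂μ = ∫ x, F x ∂μ := by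
  rw [integral_congr_ae (hμ.coeFn_koopman r F)]
  have hF : AEStronglyMeasurable F (μ.map (shift r)) := (hμ r).symm ▸ Lp.aestronglyMeasurable F
  simpa only [hμ r, Function.comp_apply] using
    (integral_map (measurable_shift r).aemeasurable hF).symm

theorem inner_const_one_left [IsFiniteMeasure μ] (F : Lp ℝ 2 μ) :
    inner ℝ (Lp.const 2 μ (1 : ℝ)) F = ∫ x, F x ∂μ := by
  rw [L2.inner_def]
  refine integral_congr_ae ?_
  filter_upwards [Lp.coeFn_const (p := 2) (μ := μ) (1 : ℝ)] with x hx
  rw [hx]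
  simp

theorem ErgodicShift.eq_const_of_koopman_fixed [IsProbabilityMeasure μ] (hμ : ErgodicShift μ)
    {v : Lp ℝ 2 μ} (hv : ∀ r, hμ.1.koopman r v = v) : v = Lp.const 2 μ (∫ x, v x ∂μ) := by
  obtain ⟨κ, hκ⟩ := hμ.ae_eq_const (Lp.stronglyMeasurable v).measurable fun r => by
    simpa only [hv r] using (hμ.1.coeFn_koopman r v).symm
  have hmean : ∫ x, v x ∂μ = κ := by simp [integral_congr_ae hκ]
  rw [hmean]
  exact Lp.ext (hκ.trans (Lp.coeFn_const (p := 2) (μ := μ) κ).symm)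

theorem ErgodicShift.const_integral_mem_closedConvexHull [IsProbabilityMeasure μ]
    (hμ : ErgodicShift μ) (F : Lp ℝ 2 μ) :
    Lp.const 2 μ (∫ x, F x ∂μ) ∈
      closedConvexHull ℝ (Set.range fun r => hμ.1.koopman r F) := by
  set S := Set.range fun r => hμ.1.koopman r F
  have hmaps (r : Site d) : Set.MapsTo (hμ.1.koopman r) S S := by
    rintro _ ⟨s, rfl⟩
    exact ⟨s + r, (hμ.1.koopman_koopman r s F).symm⟩
  obtain ⟨v, hvK, hfix⟩ := exists_mem_forall_contraction_fixed
    ((Set.range_nonempty _).mono subset_closedConvexHull : (closedConvexHull ℝ S).Nonempty)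
    isClosed_closedConvexHull convex_closedConvexHull
  have hv : v = Lp.const 2 μ (∫ x, v x ∂μ) := hμ.eq_const_of_koopman_fixed fun r =>
    hfix _ (mapsTo_closedConvexHull (hμ.1.koopman r).toContinuousLinearMap (hmaps r))
      fun w => ((hμ.1.koopman r).norm_map w).le
  have hmean : ∫ x, v x ∂μ = ∫ x, F x ∂μ := by
    have hsub : closedConvexHull ℝ S ⊆ innerSL ℝ (Lp.const 2 μ (1 : ℝ)) ⁻¹' {∫ x, F x ∂μ} := by
      refine closedConvexHull_min ?_ ((convex_singleton _).linear_preimage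
        (innerSL ℝ (Lp.const 2 μ (1 : ℝ))).toLinearMap)
        (isClosed_singleton.preimage (ContinuousLinearMap.continuous _))
      rintro _ ⟨r, rfl⟩
      simp [inner_const_one_left, hμ.1.integral_koopman]
    simpa [inner_const_one_left] using hsub hvK
  rw [hmean] at hv
  exact hv ▸ hvK

/-- The convex combination `∑ i, a i • f ∘ σ_{s i}` of translates of `f`. -/
def shiftAverage {ι : Type*} [Fintype ι] (a : ι → ℝ) (s : ι → Site d) (f : Config A d → ℝ)
    (x : Config A d) : ℝ :=
  ∑ i, a i * f (shift (s i) x)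

theorem integral_abs_le_norm [IsProbabilityMeasure μ] (F : Lp ℝ 2 μ) :
    ∫ x, |F x| ∂μ ≤ ‖F‖ := by
  have hle : eLpNorm F 1 μ ≤ eLpNorm F 2 μ :=
    eLpNorm_le_eLpNorm_of_exponent_le one_le_two (Lp.aestronglyMeasurable F)
  simp only [← Real.norm_eq_abs]
  rw [integral_norm_eq_lintegral_enorm (Lp.aestronglyMeasurable F),
    ← eLpNorm_one_eq_lintegral_enorm, Lp.norm_def]
  exact ENNReal.toReal_mono (Lp.eLpNorm_ne_top F) hle

theorem ErgodicShift.exists_shiftAverage_near_integral [IsProbabilityMeasure μ]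
    (hμ : ErgodicShift μ) {f : Config A d → ℝ} (hf : MemLp f 2 μ) {ε : ℝ} (hε : 0 < ε) :
    ∃ (ι : Type) (_ : Fintype ι) (a : ι → ℝ) (s : ι → Site d), (∀ i, 0 ≤ a i) ∧ ∑ i, a i = 1 ∧
      ∫ x, |shiftAverage a s f x - ∫ y, f y ∂μ| ∂μ < ε := by
  have hmem := hμ.const_integral_mem_closedConvexHull (hf.toLp f)
  rw [closedConvexHull_eq_closure_convexHull, integral_congr_ae hf.coeFn_toLp] at hmem
  obtain ⟨g, hg, hdist⟩ := Metric.mem_closure_iff.1 hmem ε hε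
  obtain ⟨ι, _, a, z, ha0, ha1, hz, rfl⟩ := mem_convexHull_iff_exists_fintype.1 hg
  choose s hs using hz
  have hz (i : ι) : z i =ᵐ[μ] f ∘ shift (s i) := by
    rw [← hs i]
    exact (hμ.1.coeFn_koopman _ _).trans
      ((hμ.1.measurePreserving (s i)).quasiMeasurePreserving.ae_eq_comp hf.coeFn_toLp)
  have hdiff : ⇑(∑ i, a i • z i - Lp.const 2 μ (∫ y, f y ∂μ)) =ᵐ[μ]
      fun x => shiftAverage a s f x - ∫ y, f y ∂μ := by
    filter_upwards [Lp.coeFn_sub (∑ i, a i • z i) (Lp.const 2 μ (∫ y, f y ∂μ)),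
      Lp.coeFn_finsetSum Finset.univ fun i => a i • z i,
      Lp.coeFn_const (p := 2) (μ := μ) (∫ y, f y ∂μ),
      ae_all_iff.2 fun i => Lp.coeFn_smul (a i) (z i), ae_all_iff.2 hz]
      with x hsub hsum hconst hsmul hz
    simp only [hsub, Pi.sub_apply, hsum, hconst, Finset.sum_apply, hsmul, Pi.smul_apply, hz,
      shiftAverage, smul_eq_mul, Function.comp_apply, Function.const_apply]
  refine ⟨ι, ‹_›, a, s, ha0, ha1, ?_⟩
  calc ∫ x, |shiftAverage a s f x - ∫ y, f y ∂μ| ∂μ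
      = ∫ x, |(∑ i, a i • z i - Lp.const 2 μ (∫ y, f y ∂μ) : Lp ℝ 2 μ) x| ∂μ :=
        integral_congr_ae (hdiff.symm.fun_comp abs)
    _ ≤ ‖∑ i, a i • z i - Lp.const 2 μ (∫ y, f y ∂μ)‖ := integral_abs_le_norm _
    _ < ε := by rwa [dist_comm, dist_eq_norm] at hdist

end MeanErgodic

section Blocks

/-- The cube `c + Λ_n`; in particular `block 0 n` is `Λ_n`. -/
def block (c : Site d) (n : ℕ) : Finset (Site d) :=
  Fintype.piFinset fun j => Finset.Ico (c j) (c j + n)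

@[simp]
theorem mem_block {c y : Site d} {n : ℕ} : y ∈ block c n ↔ ∀ j, c j ≤ y j ∧ y j < c j + n := by
  simp [block]

@[simp]
theorem card_block (c : Site d) (n : ℕ) : (block c n).card = n ^ d := by
  simp [block]

theorem block_subset_block {c c' : Site d} {n n' : ℕ}
    (h : ∀ j, c' j ≤ c j ∧ c j + n ≤ c' j + n') : block c n ⊆ block c' n' := fun _ hy =>
  mem_block.2 fun j =>
    ⟨(h j).1.trans (mem_block.1 hy j).1, (mem_block.1 hy j).2.trans_le (h j).2⟩

theorem disjoint_block {c c' : Site d} {k : ℕ} (h : ∃ j, c j + k ≤ c' j ∨ c' j + k ≤ c j) :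
    Disjoint (block c k) (block c' k) := by
  obtain ⟨j, hj⟩ := h
  refine Finset.disjoint_left.2 fun y hy hy' => ?_
  have := mem_block.1 hy j
  have := mem_block.1 hy' j
  omega

theorem sum_block {M : Type*} [AddCommMonoid M] (ψ : Site d → M) (c : Site d) (n : ℕ) :
    ∑ y ∈ block c n, ψ y = ∑ i : Fin d → Fin n, ψ fun j => c j + i j := by
  symm
  refine Finset.sum_nbij (fun i j => c j + (i j : ℕ)) ?_ ?_ ?_ fun _ _ => rfl
  · intro i _
    exact mem_block.2 fun j => ⟨Nat.le_add_right _ _, Nat.add_lt_add_left (i j).isLt _⟩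
  · intro i _ i' _ h
    exact funext fun j => Fin.ext (Nat.add_left_cancel (congrFun h j))
  · intro y hy
    rw [Finset.mem_coe, mem_block] at hy
    exact ⟨fun j => ⟨y j - c j, by have := hy j; omega⟩, Finset.mem_coe.2 (Finset.mem_univ _),
      funext fun j => Nat.add_sub_cancel' (hy j).1⟩

theorem sum_sum_block_le {M : Type*} [AddCommMonoid M] [PartialOrder M] [IsOrderedAddMonoid M]
    {ψ : Site d → M} (hψ : ∀ y, 0 ≤ ψ y) {V : Finset (Site d)} {n : Site d → ℕ} {N : ℕ}
    (hdisj : (V : Set (Site d)).PairwiseDisjoint fun c => block c (n c))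
    (hN : ∀ c ∈ V, ∀ j, c j + n c ≤ N) :
    ∑ c ∈ V, ∑ y ∈ block c (n c), ψ y ≤ ∑ y ∈ block 0 N, ψ y := by
  rw [← Finset.sum_biUnion hdisj]
  refine Finset.sum_le_sum_of_subset_of_nonneg (Finset.biUnion_subset.2 fun c hc => ?_)
    fun y _ _ => hψ y
  exact block_subset_block fun j => ⟨Nat.zero_le _, (hN c hc j).trans (Nat.le_add_left _ _)⟩

theorem exists_disjoint_blocks_card_le {P : Finset (Site d)} {n : Site d → ℕ}
    (hn : ∀ c ∈ P, 0 < n c) :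
    ∃ V ⊆ P, (V : Set (Site d)).PairwiseDisjoint (fun c => block c (n c)) ∧
      P.card ≤ ∑ b ∈ V, (3 * n b) ^ d := by
  obtain ⟨V, hVP, hdisj, hmeet⟩ := Vitali.exists_disjoint_subfamily_covering_enlargement
    (fun c => (block c (n c) : Set (Site d))) P (fun c => (n c : ℝ)) 2 one_lt_two
    (fun c _ => Nat.cast_nonneg _) (P.sup n : ℕ) (fun c hc => Nat.cast_le.2 (Finset.le_sup hc))
    (fun c hc => ⟨c, mem_block.2 fun j => ⟨le_rfl, Nat.lt_add_of_pos_right (hn c hc)⟩⟩)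
  lift V to Finset (Site d) using P.finite_toSet.subset hVP
  refine ⟨V, Finset.coe_subset.1 hVP, fun a ha b hb hab =>
    Finset.disjoint_coe.1 (hdisj ha hb hab), ?_⟩
  -- It contains the corner of every cube that meets `b + Λ_{n b}` and is at most twice as large.
  let enlarged (b : Site d) : Finset (Site d) :=
    Fintype.piFinset fun j => Finset.Ico (b j - 2 * n b) (b j + n b)
  have hcover : P ⊆ V.biUnion enlarged := by
    intro a ha
    obtain ⟨b, hb, ⟨y, hya, hyb⟩, hab⟩ := hmeet a ha
    have hab : n a ≤ 2 * n b := by exact_mod_cast hab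
    rw [Finset.mem_coe, mem_block] at hya hyb
    refine Finset.mem_biUnion.2 ⟨b, hb, ?_⟩
    refine Fintype.mem_piFinset.2 fun j => Finset.mem_Ico.2 ?_
    have := hya j
    have := hyb j
    omega
  have hcard (b : Site d) : (enlarged b).card ≤ (3 * n b) ^ d := by
    rw [Fintype.card_piFinset]
    refine (Finset.prod_le_pow_card _ _ (3 * n b) fun j _ => ?_).trans (by simp)
    rw [Nat.card_Ico]
    omega
  calc P.card ≤ (V.biUnion enlarged).card := Finset.card_le_card hcover
    _ ≤ ∑ b ∈ V, (enlarged b).card := Finset.card_biUnion_le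
    _ ≤ ∑ b ∈ V, (3 * n b) ^ d := Finset.sum_le_sum fun b _ => hcard b

theorem mul_card_le_of_block_sums {ψ : Site d → ℝ≥0∞} {t : ℝ≥0∞} {P : Finset (Site d)}
    {n : Site d → ℕ} {N : ℕ} (hn : ∀ c ∈ P, 0 < n c) (hN : ∀ c ∈ P, ∀ j, c j + n c ≤ N)
    (ht : ∀ c ∈ P, t * n c ^ d ≤ ∑ y ∈ block c (n c), ψ y) :
    t * P.card ≤ 3 ^ d * ∑ y ∈ block 0 N, ψ y := by
  obtain ⟨V, hVP, hdisj, hcard⟩ := exists_disjoint_blocks_card_le hn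
  calc t * P.card ≤ t * ∑ b ∈ V, (3 * n b) ^ d := by gcongr
    _ = 3 ^ d * ∑ b ∈ V, t * n b ^ d := by
        push_cast
        simp only [Finset.mul_sum, mul_pow, mul_left_comm]
    _ ≤ 3 ^ d * ∑ b ∈ V, ∑ y ∈ block b (n b), ψ y := by
        gcongr with b hb
        exact ht b (hVP hb)
    _ ≤ 3 ^ d * ∑ y ∈ block 0 N, ψ y := by
        gcongr
        exact sum_sum_block_le (fun _ => zero_le) hdisj fun c hc => hN c (hVP hc)

end Blocks

section ShiftSum

/-- The sum `∑_{c ∈ Λ_n} φ ∘ σ_c` of `φ` along the orbit. -/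
def shiftSum {M : Type*} [AddCommMonoid M] (φ : Config A d → M) (n : ℕ) (x : Config A d) : M :=
  ∑ c ∈ block 0 n, φ (shift c x)

theorem shiftSum_shift {M : Type*} [AddCommMonoid M] (φ : Config A d → M) (n : ℕ) (r : Site d)
    (x : Config A d) : shiftSum φ n (shift r x) = ∑ y ∈ block r n, φ (shift y x) := by
  simp only [shiftSum, shift_shift, sum_block, Pi.zero_apply, zero_add]
  refine Finset.sum_congr rfl fun i _ => ?_
  rw [add_comm]
  rfl

theorem measurable_shiftSum {M : Type*} [AddCommMonoid M] [MeasurableSpace M] [MeasurableAdd₂ M]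
    {φ : Config A d → M} (hφ : Measurable φ) (n : ℕ) : Measurable (shiftSum φ n) :=
  Finset.measurable_fun_sum _ fun c _ => hφ.comp (measurable_shift c)

variable {μ : Measure (Config A d)}

theorem Stationary.lintegral_shiftSum (hμ : Stationary μ) {φ : Config A d → ℝ≥0∞}
    (hφ : Measurable φ) (n : ℕ) : ∫⁻ x, shiftSum φ n x ∂μ = n ^ d * ∫⁻ x, φ x ∂μ := by
  have hshift (c : Site d) : ∫⁻ x, φ (shift c x) ∂μ = ∫⁻ x, φ x ∂μ :=
    (hμ.measurePreserving c).lintegral_comp hφ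
  simp only [shiftSum]
  rw [lintegral_finsetSum (f := fun c x => φ (shift c x)) _ fun c _ => hφ.comp (measurable_shift c)]
  simp [hshift]

/-- The points at which some average of `φ` over a cube of side at most `N` exceeds `t`; the
event of the maximal inequality. -/
def exceedanceSet (φ : Config A d → ℝ≥0∞) (t : ℝ≥0∞) (N : ℕ) : Set (Config A d) :=
  {x | ∃ n > 0, n ≤ N ∧ t * n ^ d < shiftSum φ n x}

theorem monotone_exceedanceSet (φ : Config A d → ℝ≥0∞) (t : ℝ≥0∞) :
    Monotone (exceedanceSet φ t) :=
  fun _ _ h _ ⟨n, hn, hnN, hlt⟩ => ⟨n, hn, hnN.trans h, hlt⟩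

theorem measurableSet_exceedanceSet {φ : Config A d → ℝ≥0∞} (hφ : Measurable φ) (t : ℝ≥0∞)
    (N : ℕ) : MeasurableSet (exceedanceSet φ t N) := by
  have hunion : exceedanceSet φ t N =
      ⋃ n > 0, ⋃ _ : n ≤ N, {x | t * n ^ d < shiftSum φ n x} := by
    ext x
    simp [exceedanceSet, and_left_comm]
  rw [hunion]
  exact .iUnion fun n => .iUnion fun _ => .iUnion fun _ =>
    measurableSet_lt measurable_const (measurable_shiftSum hφ n)

theorem mul_shiftSum_indicator_exceedanceSet_le (φ : Config A d → ℝ≥0∞) (t : ℝ≥0∞) (N : ℕ)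
    (x : Config A d) :
    t * shiftSum ((exceedanceSet φ t N).indicator 1) N x ≤ 3 ^ d * shiftSum φ (N + N) x := by
  classical
  have hcount : shiftSum ((exceedanceSet φ t N).indicator (1 : Config A d → ℝ≥0∞)) N x =
      ((block 0 N).filter fun c => shift c x ∈ exceedanceSet φ t N).card := by
    simp only [shiftSum, Set.indicator_apply, Pi.one_apply, Finset.sum_boole]
  have hscale (c : Site d) : ∃ n : ℕ, shift c x ∈ exceedanceSet φ t N →
      0 < n ∧ n ≤ N ∧ t * n ^ d < shiftSum φ n (shift c x) := by
    by_cases hc : shift c x ∈ exceedanceSet φ t N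
    · exact hc.imp fun n hn _ => hn
    · exact ⟨0, fun h => absurd h hc⟩
  choose n hn using hscale
  rw [hcount]
  refine mul_card_le_of_block_sums (ψ := fun y => φ (shift y x)) (n := n) ?_ ?_ ?_
    <;> intro c hc <;> obtain ⟨hcN, hc⟩ := Finset.mem_filter.1 hc
  · exact (hn c hc).1
  · exact fun j => add_le_add ((mem_block.1 hcN j).2.le.trans_eq (zero_add N)) (hn c hc).2.1
  · rw [← shiftSum_shift]
    exact (hn c hc).2.2.le

theorem Stationary.mul_measure_exceedanceSet_le (hμ : Stationary μ) {φ : Config A d → ℝ≥0∞}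
    (hφ : Measurable φ) (t : ℝ≥0∞) {N : ℕ} (hN : 0 < N) :
    t * μ (exceedanceSet φ t N) ≤ 6 ^ d * ∫⁻ x, φ x ∂μ := by
  set G := exceedanceSet φ t N
  have hG : MeasurableSet G := measurableSet_exceedanceSet hφ t N
  have hind : Measurable (G.indicator (1 : Config A d → ℝ≥0∞)) := measurable_one.indicator hG
  have hNd : (N : ℝ≥0∞) ^ d ≠ 0 := by positivity
  refine (ENNReal.mul_le_mul_iff_right hNd (by finiteness)).1 ?_
  calc (N : ℝ≥0∞) ^ d * (t * μ G) = ∫⁻ x, t * shiftSum (G.indicator 1) N x ∂μ := by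
        rw [lintegral_const_mul _ (measurable_shiftSum hind N), hμ.lintegral_shiftSum hind,
          lintegral_indicator_one hG, mul_left_comm]
    _ ≤ ∫⁻ x, 3 ^ d * shiftSum φ (N + N) x ∂μ :=
        lintegral_mono (mul_shiftSum_indicator_exceedanceSet_le φ t N)
    _ = (N : ℝ≥0∞) ^ d * (6 ^ d * ∫⁻ x, φ x ∂μ) := by
        rw [lintegral_const_mul _ (measurable_shiftSum hφ _), hμ.lintegral_shiftSum hφ,
          ← mul_assoc, ← mul_assoc, ← mul_pow, ← mul_pow]
        congr 2
        push_cast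
        ring

theorem Stationary.maximal_inequality (hμ : Stationary μ) {φ : Config A d → ℝ≥0∞}
    (hφ : Measurable φ) (t : ℝ≥0∞) :
    t * μ {x | ∃ n > 0, t * n ^ d < shiftSum φ n x} ≤ 6 ^ d * ∫⁻ x, φ x ∂μ := by
  have hmono : Monotone fun N => exceedanceSet φ t (N + 1) := fun _ _ h =>
    monotone_exceedanceSet φ t (Nat.succ_le_succ h)
  have hsub : {x | ∃ n > 0, t * n ^ d < shiftSum φ n x} ⊆
      ⋃ N, exceedanceSet φ t (N + 1) :=
    fun x ⟨n, hn, hlt⟩ => Set.mem_iUnion.2 ⟨n, n, hn, n.le_succ, hlt⟩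
  calc t * μ {x | ∃ n > 0, t * n ^ d < shiftSum φ n x}
      ≤ t * μ (⋃ N, exceedanceSet φ t (N + 1)) := by gcongr
    _ = ⨆ N, t * μ (exceedanceSet φ t (N + 1)) := by rw [hmono.measure_iUnion, ENNReal.mul_iSup]
    _ ≤ 6 ^ d * ∫⁻ x, φ x ∂μ :=
        iSup_le fun N => hμ.mul_measure_exceedanceSet_le hφ t N.succ_pos

/-- The upper orbit average `limsup_n n^{-d} ∑_{c ∈ Λ_n} φ ∘ σ_c`. -/
noncomputable def limsupAverage (φ : Config A d → ℝ≥0∞) (x : Config A d) : ℝ≥0∞ :=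
  limsup (fun n : ℕ => shiftSum φ n x / (n : ℝ≥0∞) ^ d) atTop

theorem measurable_limsupAverage {φ : Config A d → ℝ≥0∞} (hφ : Measurable φ) :
    Measurable (limsupAverage φ) :=
  .limsup fun n => (measurable_shiftSum hφ n).div_const _

theorem tendsto_natCast_add_div_pow (R d : ℕ) :
    Tendsto (fun n : ℕ => (((n + R : ℕ) : ℝ≥0∞) / n) ^ d) atTop (𝓝 1) := by
  have hR : Tendsto (fun n : ℕ => 1 + (R : ℝ≥0∞) / n) atTop (𝓝 1) := by
    simpa using tendsto_const_nhds.add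
      (ENNReal.Tendsto.const_div ENNReal.tendsto_nat_nhds_top (.inr (ENNReal.natCast_ne_top R)))
  have := ENNReal.Tendsto.pow (n := d) hR
  rw [one_pow] at this
  refine this.congr' ?_
  filter_upwards [eventually_gt_atTop 0] with n hn
  have hn0 : (n : ℝ≥0∞) ≠ 0 := by positivity
  rw [Nat.cast_add, ENNReal.add_div, ENNReal.div_self hn0 (ENNReal.natCast_ne_top n)]

theorem limsupAverage_shift_le (φ : Config A d → ℝ≥0∞) (r : Site d) (x : Config A d) :
    limsupAverage φ (shift r x) ≤ limsupAverage φ x := by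
  let R := Finset.univ.sup r
  let u (n : ℕ) : ℝ≥0∞ := shiftSum φ (n + R) x / ((n + R : ℕ) : ℝ≥0∞) ^ d
  let v (n : ℕ) : ℝ≥0∞ := (((n + R : ℕ) : ℝ≥0∞) / n) ^ d
  have hu : limsup u atTop = limsupAverage φ x :=
    limsup_nat_add (fun n : ℕ => shiftSum φ n x / (n : ℝ≥0∞) ^ d) R
  have hv : limsup v atTop = 1 := (tendsto_natCast_add_div_pow R d).limsup_eq
  have hle : ∀ᶠ n : ℕ in atTop, shiftSum φ n (shift r x) / (n : ℝ≥0∞) ^ d ≤ (u * v) n := by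
    filter_upwards [eventually_gt_atTop 0] with n hn
    have hsum : shiftSum φ n (shift r x) ≤ shiftSum φ (n + R) x := by
      rw [shiftSum_shift]
      refine Finset.sum_le_sum_of_subset (block_subset_block fun j => ?_)
      have : r j ≤ R := Finset.le_sup (Finset.mem_univ j)
      simp only [Pi.zero_apply]
      omega
    have hpow : ((n + R : ℕ) : ℝ≥0∞) ^ d ≠ 0 := by positivity
    calc shiftSum φ n (shift r x) / (n : ℝ≥0∞) ^ d
        ≤ shiftSum φ (n + R) x / (n : ℝ≥0∞) ^ d := by gcongr
      _ = (u * v) n := by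
        simp only [Pi.mul_apply, u, v, div_eq_mul_inv, mul_pow, ← ENNReal.inv_pow]
        rw [mul_assoc, ENNReal.inv_mul_cancel_left hpow (by finiteness)]
  calc limsupAverage φ (shift r x) ≤ limsup (u * v) atTop := limsup_le_limsup hle
    _ ≤ limsup u atTop * limsup v atTop :=
        ENNReal.limsup_mul_le' (.inr (by simp [hv])) (.inr (by simp [hv]))
    _ = limsupAverage φ x := by rw [hu, hv, mul_one]

theorem ErgodicShift.ae_limsupAverage_le [IsFiniteMeasure μ] (hμ : ErgodicShift μ)
    {φ : Config A d → ℝ≥0∞} (hφ : Measurable φ) {t : ℝ≥0∞} (ht : 6 ^ d * ∫⁻ x, φ x ∂μ < t) :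
    ∀ᵐ x ∂μ, limsupAverage φ x ≤ t := by
  have hmeas : MeasurableSet {x | t < limsupAverage φ x} :=
    measurableSet_lt measurable_const (measurable_limsupAverage hφ)
  have hinv (r : Site d) :
      shift r ⁻¹' {x | t < limsupAverage φ x} ⊆ {x | t < limsupAverage φ x} :=
    fun x hx => lt_of_lt_of_le hx (limsupAverage_shift_le φ r x)
  have hsub : {x | t < limsupAverage φ x} ⊆ {x | ∃ n > 0, t * n ^ d < shiftSum φ n x} := by
    intro x hx
    have hfreq : ∃ᶠ n : ℕ in atTop, t < shiftSum φ n x / (n : ℝ≥0∞) ^ d :=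
      frequently_lt_of_lt_limsup (h := hx)
    obtain ⟨n, hlt, hn⟩ := (hfreq.and_eventually (eventually_gt_atTop 0)).exists
    have hpow : (n : ℝ≥0∞) ^ d ≠ 0 := by positivity
    exact ⟨n, hn, (ENNReal.lt_div_iff_mul_lt (.inl hpow) (.inl (by finiteness))).1 hlt⟩
  rcases hμ.measure_eq_zero_or_one hmeas fun r => (hinv r).eventuallyLE with hzero | hone
  · filter_upwards [measure_eq_zero_iff_ae_notMem.1 hzero] with x hx using not_lt.1 hx
  · refine absurd (hμ.1.maximal_inequality hφ t) (not_le.2 (ht.trans_le ?_))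
    calc t = t * μ {x | t < limsupAverage φ x} := by rw [hone, mul_one]
      _ ≤ t * μ {x | ∃ n > 0, t * n ^ d < shiftSum φ n x} := by gcongr

theorem ErgodicShift.eventually_shiftSum_le [IsFiniteMeasure μ] (hμ : ErgodicShift μ)
    {φ : Config A d → ℝ} (hφ : Measurable φ) (hφ0 : ∀ x, 0 ≤ φ x) (hφi : Integrable φ μ) {t : ℝ}
    (ht : 6 ^ d * ∫ x, φ x ∂μ < t) :
    ∀ᵐ x ∂μ, ∀ᶠ n : ℕ in atTop, shiftSum φ n x ≤ t * (n : ℝ) ^ d := by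
  obtain ⟨t', ht', htt'⟩ := exists_between ht
  have hmean : 0 ≤ ∫ x, φ x ∂μ := integral_nonneg hφ0
  have ht'0 : 0 < t' := lt_of_le_of_lt (by positivity) ht'
  have hlt : 6 ^ d * ∫⁻ x, ENNReal.ofReal (φ x) ∂μ < ENNReal.ofReal t' := by
    rw [← ofReal_integral_eq_lintegral_ofReal hφi (ae_of_all _ hφ0), ← ENNReal.ofReal_ofNat 6,
      ← ENNReal.ofReal_pow (by norm_num), ← ENNReal.ofReal_mul (by positivity)]
    exact (ENNReal.ofReal_lt_ofReal_iff ht'0).2 ht'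
  have hsum (n : ℕ) (x : Config A d) :
      shiftSum (fun y => ENNReal.ofReal (φ y)) n x = ENNReal.ofReal (shiftSum φ n x) :=
    (ENNReal.ofReal_sum_of_nonneg fun _ _ => hφ0 _).symm
  filter_upwards [hμ.ae_limsupAverage_le hφ.ennreal_ofReal hlt] with x hx
  have hev := eventually_lt_of_limsup_lt
    (hx.trans_lt ((ENNReal.ofReal_lt_ofReal_iff (ht'0.trans htt')).2 htt'))
  filter_upwards [hev, eventually_gt_atTop 0] with n hn hn0
  have hpow : (0 : ℝ) < (n : ℝ) ^ d := by positivity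
  rw [hsum, ← ENNReal.ofReal_natCast, ← ENNReal.ofReal_pow (by positivity),
    ← ENNReal.ofReal_div_of_pos hpow] at hn
  exact ((div_lt_iff₀ hpow).1 (ENNReal.ofReal_lt_ofReal_iff (ht'0.trans htt') |>.1 hn)).le

end ShiftSum

section Packing

theorem wordAt_eq_wordAt_shift (x : Config A d) (k : ℕ) (c : Site d) :
    wordAt x k c = wordAt (shift c x) k 0 := by
  funext i
  simp [wordAt, shift, Pi.add_def, add_comm]

/-- The `k`-words that extend to a configuration whose `φ`-average over `Λ_k` is at most `1`.
Asking only for some extension makes this a set of words although `φ` may look beyond `Λ_k`. -/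
def typicalWords (φ : Config A d → ℝ) (k : ℕ) : Set (Word A d k) :=
  (wordAt · k 0) '' {x | shiftSum φ k x ≤ (k : ℝ) ^ d}

theorem lt_sum_block_of_wordAt_notMem {φ : Config A d → ℝ} {k : ℕ} {x : Config A d} {c : Site d}
    (hc : wordAt x k c ∉ typicalWords φ k) :
    (k : ℝ) ^ d < ∑ y ∈ block c k, φ (shift y x) := by
  rw [← shiftSum_shift]
  by_contra! hle
  exact hc ⟨shift c x, hle, (wordAt_eq_wordAt_shift x k c).symm⟩

theorem mul_card_atypical_le {φ : Config A d → ℝ} (hφ : ∀ x, 0 ≤ φ x) {k n : ℕ}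
    {x : Config A d} {F : Finset (Site d)} (hFn : ∀ c ∈ F, ∀ j, c j + k ≤ n)
    (hdisj : (F : Set (Site d)).PairwiseDisjoint fun c => block c k)
    (hF : ∀ c ∈ F, wordAt x k c ∉ typicalWords φ k) :
    (k : ℝ) ^ d * F.card ≤ shiftSum φ n x :=
  calc (k : ℝ) ^ d * F.card = ∑ _c ∈ F, (k : ℝ) ^ d := by
        rw [Finset.sum_const, nsmul_eq_mul, mul_comm]
    _ ≤ ∑ c ∈ F, ∑ y ∈ block c k, φ (shift y x) :=
        Finset.sum_le_sum fun c hc => (lt_sum_block_of_wordAt_notMem (hF c hc)).le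
    _ ≤ shiftSum φ n x := sum_sum_block_le (fun _ => hφ _) hdisj hFn

theorem one_sub_mul_card_le_ncard_typical {φ : Config A d → ℝ} (hφ : ∀ x, 0 ≤ φ x)
    {ε β : ℝ} (hε : 0 ≤ ε) {k n : ℕ} (hk : 0 < k) {x : Config A d}
    (hx : shiftSum φ n x ≤ ε * β * (n : ℝ) ^ d) {F : Finset (Site d)}
    (hFn : ∀ c ∈ F, ∀ j, c j + k ≤ n)
    (hdisj : ∀ c ∈ F, ∀ c' ∈ F, c ≠ c' → ∃ j, c j + k ≤ c' j ∨ c' j + k ≤ c j)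
    (hcard : β * (n : ℝ) ^ d ≤ F.card * (k : ℝ) ^ d) :
    (1 - ε) * F.card ≤ Set.ncard {c | c ∈ F ∧ wordAt x k c ∈ typicalWords φ k} := by
  classical
  let bad := F.filter fun c => wordAt x k c ∉ typicalWords φ k
  have hbadF : bad ⊆ F := Finset.filter_subset _ _
  have hbad : (bad.card : ℝ) ≤ ε * F.card := by
    have hkd : 0 < (k : ℝ) ^ d := by positivity
    refine le_of_mul_le_mul_left ?_ hkd
    calc (k : ℝ) ^ d * bad.card ≤ shiftSum φ n x :=
          mul_card_atypical_le hφ (fun c hc => hFn c (hbadF hc))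
            (fun c hc c' hc' hne => disjoint_block (hdisj c (hbadF hc) c' (hbadF hc') hne))
            fun c hc => (Finset.mem_filter.1 hc).2
      _ ≤ ε * (β * (n : ℝ) ^ d) := hx.trans_eq (by ring)
      _ ≤ ε * (F.card * (k : ℝ) ^ d) := by gcongr
      _ = (k : ℝ) ^ d * (ε * F.card) := by ring
  have hsplit : (F.card : ℝ) =
      Set.ncard {c | c ∈ F ∧ wordAt x k c ∈ typicalWords φ k} + bad.card := by
    rw [← Finset.coe_filter, Set.ncard_coe_finset]
    exact_mod_cast (Finset.card_filter_add_card_filter_not _).symm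
  linarith

theorem ErgodicShift.ae_eventually_ncard_typical_ge {μ : Measure (Config A d)}
    [IsFiniteMeasure μ] (hμ : ErgodicShift μ) {φ : Config A d → ℝ} (hφ : Measurable φ)
    (hφ0 : ∀ x, 0 ≤ φ x) (hφi : Integrable φ μ) {ε β : ℝ} (hε : 0 ≤ ε)
    (hmean : 6 ^ d * ∫ x, φ x ∂μ < ε * β) {k : ℕ} (hk : 0 < k) :
    ∀ᵐ x ∂μ, ∀ᶠ n : ℕ in atTop, ∀ F : Finset (Site d),
      (∀ c ∈ F, ∀ j, c j + k ≤ n) →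
      (∀ c ∈ F, ∀ c' ∈ F, c ≠ c' → ∃ j, c j + k ≤ c' j ∨ c' j + k ≤ c j) →
      β * (n : ℝ) ^ d ≤ F.card * (k : ℝ) ^ d →
      (1 - ε) * F.card ≤ Set.ncard {c | c ∈ F ∧ wordAt x k c ∈ typicalWords φ k} := by
  filter_upwards [hμ.eventually_shiftSum_le hφ hφ0 hφi hmean] with x hx
  filter_upwards [hx] with n hn F hFn hdisj hcard
  exact one_sub_mul_card_le_ncard_typical hφ0 hε hk hn hFn hdisj hcard

end Packing

section Kraft

variable {α B I J P : Type*} [Fintype α] [Fintype B] [Fintype I] [Fintype J] [Fintype P]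

theorem sum_comp_embedding [DecidableEq J] [DecidableEq P] {M : Type*} [AddCommMonoid M]
    (e : J ↪ P) (g : (J → α) → M) :
    ∑ w : P → α, g (w ∘ e) =
      Fintype.card α ^ (Fintype.card P - Fintype.card J) • ∑ v, g v := by
  classical
  have hcompl : Fintype.card {p // p ∉ Set.range e} = Fintype.card P - Fintype.card J := by
    rw [Fintype.card_subtype_compl, ← Fintype.card_congr (Equiv.ofInjective e e.injective)]
  let split : (P → α) ≃ (J → α) × ({p // p ∉ Set.range e} → α) :=
    (Equiv.piEquivPiSubtypeProd (· ∈ Set.range e) fun _ => α).trans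
      (Equiv.prodCongr ((Equiv.ofInjective e e.injective).arrowCongr (.refl α)).symm (.refl _))
  calc ∑ w : P → α, g (w ∘ e) = ∑ p : (J → α) × ({p // p ∉ Set.range e} → α), g p.1 :=
        Fintype.sum_equiv split _ _ fun _ => rfl
    _ = Fintype.card α ^ (Fintype.card P - Fintype.card J) • ∑ v, g v := by
        simp only [Fintype.sum_prod_type_right, Finset.sum_const, Finset.card_univ,
          Fintype.card_fun, hcompl]

theorem sum_prod_comp_embedding [DecidableEq I] [DecidableEq P] {R : Type*} [CommSemiring R]
    (e : B × I ↪ P) (q : (I → α) → R) :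
    ∑ w : P → α, ∏ b, q (fun i => w (e (b, i))) =
      Fintype.card α ^ (Fintype.card P - Fintype.card B * Fintype.card I) *
        (∑ v, q v) ^ Fintype.card B := by
  classical
  have hprod : ∑ v : B × I → α, ∏ b, q (fun i => v (b, i)) = (∑ v, q v) ^ Fintype.card B :=
    calc ∑ v : B × I → α, ∏ b, q (fun i => v (b, i)) = ∑ v : B → I → α, ∏ b, q (v b) :=
          Fintype.sum_equiv (Equiv.curry B I α) _ _ fun _ => rfl
      _ = (∑ v, q v) ^ Fintype.card B := by
          rw [← Fintype.prod_sum fun (_ : B) v => q v, Finset.prod_const, Finset.card_univ]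
  have hsum := sum_comp_embedding e fun v : B × I → α => ∏ b, q fun i => v (b, i)
  rw [hprod, nsmul_eq_mul, Fintype.card_prod, Nat.cast_pow] at hsum
  exact hsum

/-- The length `-log_A q(w)` of `w` under the ideal base-`A` code with weights `q`. -/
noncomputable def codeLength (A : ℕ) {W : Type*} (q : W → ℝ) (w : W) : ℝ :=
  -Real.logb A (q w)

theorem codeLength_nonneg (A : ℕ) {W : Type*} [Fintype W] {q : W → ℝ} (hq0 : ∀ w, 0 ≤ q w)
    (hq1 : ∑ w, q w ≤ 1) (w : W) : 0 ≤ codeLength A q w := by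
  have hw : q w ≤ 1 := (Finset.single_le_sum (fun w _ => hq0 w) (Finset.mem_univ w)).trans hq1
  exact neg_nonneg.2 <| div_nonpos_of_nonpos_of_nonneg (Real.log_nonpos (hq0 w) hw)
    (Real.log_natCast_nonneg A)

theorem card_le_of_sum_codeLength_le [DecidableEq I] {A : ℕ} (hA : 2 ≤ A) (e : B × I ↪ P)
    {q : (I → α) → ℝ} (hq0 : ∀ v, 0 < q v) (hq1 : ∑ v, q v ≤ 1) {C : ℝ} {S : Finset (P → α)}
    (hS : ∀ w ∈ S, ∑ b, codeLength A q (fun i => w (e (b, i))) ≤ C) :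
    (S.card : ℝ) ≤
      (A : ℝ) ^ C * Fintype.card α ^ (Fintype.card P - Fintype.card B * Fintype.card I) := by
  classical
  have hA1 : (1 : ℝ) < A := by exact_mod_cast hA
  have hA0 : (0 : ℝ) < A := one_pos.trans hA1
  have hweight : ∀ w ∈ S, (A : ℝ) ^ (-C) ≤ ∏ b, q fun i => w (e (b, i)) := by
    intro w hw
    have hlen := hS w hw
    simp only [codeLength, Finset.sum_neg_distrib] at hlen
    rw [← Real.le_logb_iff_rpow_le hA1 (Finset.prod_pos fun b _ => hq0 _),
      Real.logb_prod _ _ fun b _ => (hq0 _).ne']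
    linarith
  rw [← div_le_iff₀' (by positivity), div_eq_mul_inv, ← Real.rpow_neg hA0.le]
  calc (S.card : ℝ) * (A : ℝ) ^ (-C) = ∑ _w ∈ S, (A : ℝ) ^ (-C) := by
        rw [Finset.sum_const, nsmul_eq_mul]
    _ ≤ ∑ w ∈ S, ∏ b, q fun i => w (e (b, i)) := Finset.sum_le_sum hweight
    _ ≤ ∑ w : P → α, ∏ b, q fun i => w (e (b, i)) :=
        Finset.sum_le_univ_sum_of_nonneg fun w => Finset.prod_nonneg fun b _ => (hq0 _).le
    _ = Fintype.card α ^ (Fintype.card P - Fintype.card B * Fintype.card I) *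
          (∑ v, q v) ^ Fintype.card B := sum_prod_comp_embedding e q
    _ ≤ Fintype.card α ^ (Fintype.card P - Fintype.card B * Fintype.card I) :=
        mul_le_of_le_one_right (by positivity)
          (pow_le_one₀ (Finset.sum_nonneg fun v _ => (hq0 v).le) hq1)

end Kraft

section Grid

/-- The index equivalence behind cutting `Λ_{l m}` into `l^d` translates of `Λ_m`: the pair `(b, i)`
is the site `i` of the `b`-th translate, namely `m b + i`. -/
def gridEquiv (d l m : ℕ) : (Fin d → Fin l) × (Fin d → Fin m) ≃ (Fin d → Fin (l * m)) :=
  (Equiv.arrowProdEquivProdArrow (Fin d) (fun _ => Fin l) fun _ => Fin m).symm.trans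
    ((Equiv.refl (Fin d)).arrowCongr finProdFinEquiv)

theorem gridEquiv_apply (l m : ℕ) (b : Fin d → Fin l) (i : Fin d → Fin m) (j : Fin d) :
    (gridEquiv d l m (b, i) j : ℕ) = i j + m * b j := rfl

/-- The cut of the subcube `s + Λ_{l m}` of `Λ_k` into translates of `Λ_m`. -/
def gridEmbedding {l m k : ℕ} {s : Site d} (hs : ∀ j, s j + l * m ≤ k) :
    (Fin d → Fin l) × (Fin d → Fin m) ↪ (Fin d → Fin k) :=
  (gridEquiv d l m).toEmbedding.trans <| Function.Embedding.piCongrRight fun j =>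
    ((Fin.natAddEmb (s j)).trans (Fin.castLEEmb (hs j)))

theorem wordAt_gridEmbedding {l m k : ℕ} {s : Site d} (hs : ∀ j, s j + l * m ≤ k)
    (x : Config A d) (b : Fin d → Fin l) :
    (fun i => wordAt x k 0 (gridEmbedding hs (b, i))) =
      wordAt x m fun j => s j + m * b j := by
  funext i
  have hsite (j : Fin d) : 0 + (gridEmbedding hs (b, i) j : ℕ) = s j + m * b j + i j := by
    change 0 + (s j + (i j + m * b j)) = _
    ring
  simp only [wordAt, Pi.zero_apply, hsite]

theorem sum_block_mul {M : Type*} [AddCommMonoid M] (ψ : Site d → M) (c : Site d) (l m : ℕ) :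
    ∑ y ∈ block c (l * m), ψ y =
      ∑ r : Fin d → Fin m, ∑ b : Fin d → Fin l, ψ fun j => c j + r j + m * b j := by
  rw [sum_block, ← (gridEquiv d l m).sum_comp, Fintype.sum_prod_type_right]
  simp only [gridEquiv_apply, add_assoc]

theorem exists_offset_sum_le {l m : ℕ} (hm : 0 < m) {ψ : Site d → ℝ} {c : Site d} {C : ℝ}
    (hC : ∑ y ∈ block c (l * m), ψ y ≤ C) :
    ∃ r : Fin d → Fin m,
      ∑ b : Fin d → Fin l, ψ (fun j => c j + r j + m * b j) ≤ C / (m : ℝ) ^ d := by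
  have : NeZero m := ⟨hm.ne'⟩
  have hmd : (m : ℝ) ^ d ≠ 0 := by positivity
  rw [sum_block_mul] at hC
  have hmean : ∑ r : Fin d → Fin m, ∑ b : Fin d → Fin l, ψ (fun j => c j + r j + m * b j) ≤
      ∑ _r : Fin d → Fin m, C / (m : ℝ) ^ d := by
    simpa [mul_div_cancel₀ C hmd] using hC
  simpa using Finset.exists_le_of_sum_le Finset.univ_nonempty hmean

end Grid

section Entropy

theorem exists_pos_code_le_entH_add_one (hA : 2 ≤ A) {W : Type*} [Fintype W] [Nonempty W]
    {p : W → ℝ} (hp0 : ∀ w, 0 ≤ p w) (hp1 : ∑ w, p w = 1) :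
    ∃ q : W → ℝ, (∀ w, 0 < q w) ∧ ∑ w, q w = 1 ∧
      ∑ w, p w * codeLength A q w ≤ entH A p + 1 := by
  have hA1 : (1 : ℝ) < A := by exact_mod_cast hA
  have hcard : (0 : ℝ) < Fintype.card W := by exact_mod_cast Fintype.card_pos
  -- Mixing with the uniform distribution makes the weights positive and costs `log_A 2 ≤ 1`.
  refine ⟨fun w => (p w + 1 / Fintype.card W) / 2, fun w => ?_, ?_, ?_⟩
  · have := hp0 w
    positivity
  · rw [← Finset.sum_div, Finset.sum_add_distrib, hp1, Finset.sum_const, Finset.card_univ,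
      nsmul_eq_mul, mul_one_div_cancel hcard.ne']
    norm_num
  · have hlog2 : Real.logb A 2 ≤ 1 := by
      rw [Real.logb_le_iff_le_rpow hA1 two_pos, Real.rpow_one]
      exact_mod_cast hA
    have hent : entH A p + 1 = ∑ w, (-(p w * Real.logb A (p w)) + p w) := by
      rw [entH, Finset.sum_add_distrib, Finset.sum_neg_distrib, hp1]
    rw [hent]
    refine Finset.sum_le_sum fun w _ => ?_
    rcases (hp0 w).eq_or_lt with hpw | hpw
    · simp [← hpw]
    · have hle : Real.logb A (p w / 2) ≤ Real.logb A ((p w + 1 / Fintype.card W) / 2) :=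
        Real.logb_le_logb_of_le hA1 (by positivity) (by gcongr; simp)
      rw [Real.logb_div hpw.ne' two_ne_zero] at hle
      simp only [codeLength]
      nlinarith

theorem measurable_wordAt (k : ℕ) (c : Site d) :
    Measurable fun x : Config A d => wordAt x k c :=
  measurable_pi_lambda _ fun i => measurable_pi_apply fun j => c j + (i j : ℕ)

variable {μ : Measure (Config A d)}

theorem integral_wordAt [IsFiniteMeasure μ] (m : ℕ) (g : Word A d m → ℝ) :
    ∫ x, g (wordAt x m 0) ∂μ = ∑ w, wordDist μ m w * g w := by
  have hword := measurable_wordAt (A := A) m (0 : Site d)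
  rw [← integral_map (f := g) hword.aemeasurable (measurable_of_finite g).aestronglyMeasurable,
    integral_fintype .of_finite]
  refine Finset.sum_congr rfl fun w _ => ?_
  rw [smul_eq_mul, map_measureReal_apply hword (.singleton w)]
  rfl

theorem sum_wordDist [IsProbabilityMeasure μ] (m : ℕ) : ∑ w, wordDist μ m w = 1 := by
  simpa using (integral_wordAt (μ := μ) m fun _ => 1).symm

theorem exists_pos_code_integral_le [IsProbabilityMeasure μ] (hA : 2 ≤ A) (m : ℕ) :
    ∃ q : Word A d m → ℝ, (∀ w, 0 < q w) ∧ ∑ w, q w = 1 ∧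
      ∫ x, codeLength A q (wordAt x m 0) ∂μ ≤ entH A (wordDist μ m) + 1 := by
  have : NeZero A := ⟨by omega⟩
  simp only [integral_wordAt]
  exact exists_pos_code_le_entH_add_one hA (fun w => ENNReal.toReal_nonneg) (sum_wordDist m)

end Entropy

section Counting

/-- The distance to the constant `H` of the convex combination `shiftAverage a s f`; its smallness
on a word defines typicality. -/
def deviation {ι : Type*} [Fintype ι] (a : ι → ℝ) (s : ι → Site d) (f : Config A d → ℝ) (H : ℝ)
    (x : Config A d) : ℝ :=
  |shiftAverage a s f x - H|

variable {ι : Type*} [Fintype ι] {a : ι → ℝ} {s : ι → Site d} {H : ℝ}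

theorem shiftSum_shiftAverage (a : ι → ℝ) (s : ι → Site d) (f : Config A d → ℝ) (k : ℕ)
    (x : Config A d) :
    shiftSum (shiftAverage a s f) k x = ∑ i, a i * ∑ y ∈ block (s i) k, f (shift y x) := by
  simp only [shiftSum, shiftAverage, ← shiftSum_shift, Finset.mul_sum, shift_shift]
  rw [Finset.sum_comm]
  simp only [add_comm]

theorem sum_block_le_of_shiftSum_deviation_le (ha0 : ∀ i, 0 ≤ a i) (ha1 : ∑ i, a i = 1)
    {f : Config A d → ℝ} (hf : ∀ x, 0 ≤ f x) {k n : ℕ} {x : Config A d} {C : ℝ}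
    (hx : shiftSum (deviation a s f H) k x ≤ C) {r : Site d} (hs : ∀ i, s i ≤ r)
    (hr : ∀ j, r j + n ≤ k) :
    ∑ y ∈ block r n, f (shift y x) ≤ C + H * (k : ℝ) ^ d :=
  calc ∑ y ∈ block r n, f (shift y x) = ∑ i, a i * ∑ y ∈ block r n, f (shift y x) := by
        rw [← Finset.sum_mul, ha1, one_mul]
    _ ≤ ∑ i, a i * ∑ y ∈ block (s i) k, f (shift y x) := by
        gcongr with i
        · exact ha0 i
        · exact fun y _ _ => hf _
        · exact block_subset_block fun j => ⟨hs i j, (hr j).trans (Nat.le_add_left _ _)⟩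
    _ = shiftSum (shiftAverage a s f) k x := (shiftSum_shiftAverage a s f k x).symm
    _ ≤ ∑ c ∈ block 0 k, (deviation a s f H (shift c x) + H) :=
        Finset.sum_le_sum fun c _ => sub_le_iff_le_add.1 (le_abs_self _)
    _ ≤ C + H * (k : ℝ) ^ d := by
        rw [Finset.sum_add_distrib, Finset.sum_const, card_block, nsmul_eq_mul, Nat.cast_pow,
          mul_comm H]
        gcongr
        exact hx

variable {m : ℕ} {q : Word A d m → ℝ}

theorem ncard_typicalWords_le (hA : 2 ≤ A) (ha0 : ∀ i, 0 ≤ a i) (ha1 : ∑ i, a i = 1) (hm : 0 < m)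
    (hq0 : ∀ w, 0 < q w) (hq1 : ∑ w, q w ≤ 1) {r : Site d} (hs : ∀ i, s i ≤ r) {l k : ℕ}
    (hr : ∀ j, r j + m + l * m ≤ k) :
    ((typicalWords (deviation a s (fun x => codeLength A q (wordAt x m 0)) H) k).ncard : ℝ) ≤
      (m : ℝ) ^ d * ((A : ℝ) ^ ((1 + H) * (k : ℝ) ^ d / (m : ℝ) ^ d) *
        (A : ℝ) ^ (k ^ d - l ^ d * m ^ d)) := by
  classical
  set C : ℝ := (1 + H) * (k : ℝ) ^ d / (m : ℝ) ^ d
  have hgrid (o : Fin d → Fin m) (j : Fin d) : r j + o j + l * m ≤ k := by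
    have := hr j
    omega
  let S (o : Fin d → Fin m) : Finset (Word A d k) := Finset.univ.filter fun w =>
    ∑ b, codeLength A q (fun i => w (gridEmbedding (hgrid o) (b, i))) ≤ C
  have hcard (o : Fin d → Fin m) :
      ((S o).card : ℝ) ≤ (A : ℝ) ^ C * (A : ℝ) ^ (k ^ d - l ^ d * m ^ d) := by
    simpa using card_le_of_sum_codeLength_le hA (gridEmbedding (hgrid o)) hq0 hq1
      fun w hw => (Finset.mem_filter.1 hw).2
  have hcover : typicalWords (deviation a s (fun x => codeLength A q (wordAt x m 0)) H) k ⊆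
      Finset.univ.biUnion S := by
    rintro _ ⟨x, hx, rfl⟩
    have hsum := sum_block_le_of_shiftSum_deviation_le ha0 ha1
      (fun x => codeLength_nonneg A (fun w => (hq0 w).le) hq1 (wordAt x m 0)) hx hs
      (n := l * m) fun j => by have := hr j; omega
    obtain ⟨o, ho⟩ := exists_offset_sum_le hm hsum
    refine Finset.mem_coe.2 (Finset.mem_biUnion.2
      ⟨o, Finset.mem_univ _, Finset.mem_filter.2 ⟨Finset.mem_univ _, ?_⟩⟩)
    simp only [wordAt_gridEmbedding]
    simpa only [← wordAt_eq_wordAt_shift, ← one_add_mul] using ho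
  calc ((typicalWords _ k).ncard : ℝ) ≤ (Finset.univ.biUnion S).card := by
        rw [← Set.ncard_coe_finset]
        exact_mod_cast Set.ncard_le_ncard hcover
    _ ≤ ∑ o, ((S o).card : ℝ) := by exact_mod_cast Finset.card_biUnion_le
    _ ≤ ∑ _o : Fin d → Fin m, (A : ℝ) ^ C * (A : ℝ) ^ (k ^ d - l ^ d * m ^ d) :=
        Finset.sum_le_sum fun o _ => hcard o
    _ = _ := by simp

theorem logb_ncard_typicalWords_div_le (hA : 2 ≤ A) (ha0 : ∀ i, 0 ≤ a i) (ha1 : ∑ i, a i = 1)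
    (hm : 0 < m) (hq0 : ∀ w, 0 < q w) (hq1 : ∑ w, q w ≤ 1) (hH : 0 ≤ H) {r : Site d}
    (hs : ∀ i, s i ≤ r) {D l k : ℕ} (hr : ∀ j, r j + m ≤ D) (hk : 0 < k) (hlk : D + l * m ≤ k) :
    Real.logb A (typicalWords (deviation a s (fun x => codeLength A q (wordAt x m 0)) H) k).ncard /
        (k : ℝ) ^ d ≤
      (1 + H) / (m : ℝ) ^ d + Real.logb A ((m : ℝ) ^ d) / (k : ℝ) ^ d +
        (1 - (((l * m : ℕ) : ℝ) / k) ^ d) := by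
  have hA1 : (1 : ℝ) < A := by exact_mod_cast hA
  have hA0 : (0 : ℝ) < A := one_pos.trans hA1
  have hmd : (1 : ℝ) ≤ (m : ℝ) ^ d := one_le_pow₀ (by exact_mod_cast hm)
  have hpow : l ^ d * m ^ d ≤ k ^ d :=
    (mul_pow l m d).symm.trans_le (Nat.pow_le_pow_left (le_of_add_le_right hlk) d)
  have hlogm : 0 ≤ Real.logb A ((m : ℝ) ^ d) := Real.logb_nonneg hA1 hmd
  calc _ ≤ (Real.logb A ((m : ℝ) ^ d) + ((1 + H) * (k : ℝ) ^ d / (m : ℝ) ^ d +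
        (k ^ d - l ^ d * m ^ d : ℕ))) / (k : ℝ) ^ d := by
        gcongr
        rcases (Nat.cast_nonneg (α := ℝ) (Set.ncard _)).eq_or_lt with hzero | hpos
        · rw [← hzero, Real.logb_zero]
          positivity
        · rw [Real.logb_le_iff_le_rpow hA1 hpos, Real.rpow_add hA0, Real.rpow_add hA0,
            Real.rpow_logb hA0 hA1.ne' (by positivity), Real.rpow_natCast]
          exact ncard_typicalWords_le hA ha0 ha1 hm hq0 hq1 hs fun j =>
            (Nat.add_le_add_right (hr j) _).trans hlk
    _ = _ := by
        rw [Nat.cast_sub hpow]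
        push_cast
        rw [div_pow, mul_pow]
        field_simp
        ring

theorem tendsto_natCast_div_self {u : ℕ → ℕ} {D : ℕ} (hle : ∀ k, u k ≤ k)
    (hge : ∀ k, k ≤ u k + D) : Tendsto (fun k : ℕ => (u k : ℝ) / k) atTop (𝓝 1) := by
  have hlower : Tendsto (fun k : ℕ => 1 - (D : ℝ) / k) atTop (𝓝 1) := by
    simpa using tendsto_const_nhds.sub (tendsto_const_div_atTop_nhds_zero_nat (D : ℝ))
  refine tendsto_of_tendsto_of_tendsto_of_le_of_le' hlower tendsto_const_nhds ?_
    (.of_forall fun k => div_le_one_of_le₀ (by exact_mod_cast hle k) (Nat.cast_nonneg k))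
  filter_upwards [eventually_gt_atTop 0] with k hk
  have hk0 : (0 : ℝ) < k := by exact_mod_cast hk
  rw [one_sub_div hk0.ne']
  gcongr
  rw [sub_le_iff_le_add]
  exact_mod_cast hge k

theorem tendsto_natCast_pow_atTop (hd : d ≠ 0) :
    Tendsto (fun k : ℕ => (k : ℝ) ^ d) atTop atTop :=
  (tendsto_pow_atTop hd).comp tendsto_natCast_atTop_atTop

theorem eventually_logb_ncard_typicalWords_div_le (hA : 2 ≤ A) (hd : d ≠ 0)
    (ha0 : ∀ i, 0 ≤ a i) (ha1 : ∑ i, a i = 1) (hm : 0 < m) (hq0 : ∀ w, 0 < q w)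
    (hq1 : ∑ w, q w ≤ 1) (hH : 0 ≤ H) {t : ℝ} (ht : (1 + H) / (m : ℝ) ^ d < t) :
    ∀ᶠ k : ℕ in atTop, Real.logb A (typicalWords
      (deviation a s (fun x => codeLength A q (wordAt x m 0)) H) k).ncard / (k : ℝ) ^ d ≤ t := by
  let r : Site d := Finset.univ.sup s
  let D := Finset.univ.sup r + m
  let l (k : ℕ) := (k - D) / m
  have hlle (k : ℕ) : l k * m ≤ k - D := Nat.div_mul_le_self _ _
  have hlge (k : ℕ) : k ≤ l k * m + (D + m) := by
    have : k - D < l k * m + m := Nat.lt_div_mul_add hm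
    omega
  have hratio : Tendsto (fun k => 1 - (((l k * m : ℕ) : ℝ) / k) ^ d) atTop (𝓝 0) := by
    have := tendsto_natCast_div_self (fun k => (hlle k).trans (Nat.sub_le _ _)) hlge
    simpa using (this.pow d).const_sub 1
  have hgrids : Tendsto (fun k : ℕ => Real.logb A ((m : ℝ) ^ d) / (k : ℝ) ^ d) atTop (𝓝 0) :=
    (tendsto_natCast_pow_atTop hd).const_div_atTop _
  have hlim := (hgrids.const_add ((1 + H) / (m : ℝ) ^ d)).add hratio
  rw [add_zero, add_zero] at hlim
  filter_upwards [hlim.eventually_lt_const ht, eventually_gt_atTop 0, eventually_ge_atTop D]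
    with k hk hk0 hkD
  refine (logb_ncard_typicalWords_div_le hA ha0 ha1 hm hq0 hq1 hH
    (fun i => Finset.le_sup (Finset.mem_univ i))
    (fun j => Nat.add_le_add_right (Finset.le_sup (Finset.mem_univ j)) m) hk0
    ((Nat.add_le_add_left (hlle k) D).trans_eq (Nat.add_sub_cancel' hkD))).trans hk.le

end Counting

section TypicalSets

variable {μ : Measure (Config A d)} [IsProbabilityMeasure μ]

theorem measurable_deviation {ι : Type*} [Fintype ι] (a : ι → ℝ) (s : ι → Site d)
    {f : Config A d → ℝ} (hf : Measurable f) (H : ℝ) : Measurable (deviation a s f H) :=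
  ((Finset.measurable_fun_sum _ fun i _ =>
    (hf.comp (measurable_shift (s i))).const_mul (a i)).sub_const H).norm

theorem Stationary.integrable_deviation (hμ : Stationary μ) {ι : Type*} [Fintype ι] (a : ι → ℝ)
    (s : ι → Site d) {f : Config A d → ℝ} (hf : Integrable f μ) (H : ℝ) :
    Integrable (deviation a s f H) μ :=
  ((integrable_finsetSum _ fun i _ =>
    ((hμ.measurePreserving (s i)).integrable_comp_of_integrable hf).const_mul (a i)).sub
      (integrable_const H)).abs

theorem HasEntropyRate.exists_code {h : ℝ} (hrate : HasEntropyRate μ h) (hA : 2 ≤ A) (hd : d ≠ 0)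
    {t : ℝ} (ht : h < t) :
    ∃ m > 0, ∃ q : Word A d m → ℝ, (∀ w, 0 < q w) ∧ ∑ w, q w = 1 ∧
      (1 + ∫ x, codeLength A q (wordAt x m 0) ∂μ) / (m : ℝ) ^ d < t := by
  have hlim := hrate.add ((tendsto_natCast_pow_atTop hd).const_div_atTop 2)
  rw [add_zero] at hlim
  obtain ⟨m, hmt, hm⟩ := ((hlim.eventually_lt_const ht).and (eventually_gt_atTop 0)).exists
  obtain ⟨q, hq0, hq1, hq⟩ := exists_pos_code_integral_le (μ := μ) hA m
  refine ⟨m, hm, q, hq0, hq1, lt_of_le_of_lt ?_ hmt⟩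
  rw [← add_div]
  exact div_le_div_of_nonneg_right (by linarith) (by positivity)

theorem ErgodicShift.exists_entropy_typical (hμ : ErgodicShift μ) {h : ℝ}
    (hrate : HasEntropyRate μ h) (hA : 2 ≤ A) (hd : d ≠ 0) {t ε : ℝ} (ht : h < t) (hε : 0 < ε) :
    ∃ φ : Config A d → ℝ, Measurable φ ∧ (∀ x, 0 ≤ φ x) ∧ Integrable φ μ ∧ ∫ x, φ x ∂μ < ε ∧
      ∀ᶠ k : ℕ in atTop, Real.logb A (typicalWords φ k).ncard / (k : ℝ) ^ d ≤ t := by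
  obtain ⟨m, hm, q, hq0, hq1, hqt⟩ := hrate.exists_code hA hd ht
  let f (x : Config A d) : ℝ := codeLength A q (wordAt x m 0)
  have hf : Measurable f := (measurable_of_finite (codeLength A q)).comp (measurable_wordAt m 0)
  have hf0 (x : Config A d) : 0 ≤ f x := codeLength_nonneg A (fun w => (hq0 w).le) hq1.le _
  have hfbound (x : Config A d) : ‖f x‖ ≤ ∑ w, ‖codeLength A q w‖ :=
    Finset.single_le_sum (f := fun w => ‖codeLength A q w‖) (fun w _ => norm_nonneg _)
      (Finset.mem_univ (wordAt x m 0))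
  have hf2 : MemLp f 2 μ := .of_bound hf.aestronglyMeasurable _ (ae_of_all _ hfbound)
  obtain ⟨ι, _, a, s, ha0, ha1, hmean⟩ := hμ.exists_shiftAverage_near_integral hf2 hε
  exact ⟨deviation a s f (∫ x, f x ∂μ), measurable_deviation a s hf _, fun x => abs_nonneg _,
    hμ.1.integrable_deviation a s (hf2.integrable one_le_two) _, hmean,
    eventually_logb_ncard_typicalWords_div_le hA hd ha0 ha1 hm hq0 hq1.le (integral_nonneg hf0) hqt⟩

end TypicalSets

/-- For every ergodic `μ` with entropy rate `h`, `δ, δ' > 0` and `β ∈ (0,1]`,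
for all large enough `k` there is a set `𝒯_k` of `k`-words of log-cardinality at most
`(h+δ)k^d` such that, almost surely, eventually in `n`: in every collection of pairwise
non-overlapping `k`-blocks inside `Λ_n` covering at least a `β`-fraction of `Λ_n`, at least a
`(1-δ')`-fraction of the blocks carry words from `𝒯_k`. -/
theorem typical_sampling_sets_for_packings
    (A d : ℕ) (hA : 2 ≤ A) (hd : 1 ≤ d)
    (μ : Measure (Config A d)) [IsProbabilityMeasure μ] (hμ : ErgodicShift μ)
    (h : ℝ) (hrate : HasEntropyRate μ h)
    (δ δ' β : ℝ) (hδ : 0 < δ) (hδ' : 0 < δ') (hβ0 : 0 < β) (hβ1 : β ≤ 1) :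
    ∃ k0 : ℕ, ∀ k ≥ k0, ∃ T : Set (Word A d k),
      Real.logb A (Set.ncard T) / (k : ℝ) ^ d ≤ h + δ ∧
      ∀ᵐ x ∂μ, ∃ n0 : ℕ, ∀ n ≥ n0,
        ∀ F : Finset (Site d),
          (∀ c ∈ F, ∀ j, c j + k ≤ n) →
          (∀ c ∈ F, ∀ c' ∈ F, c ≠ c' → (∃ j, c j + k ≤ c' j ∨ c' j + k ≤ c j)) →
          β * (n : ℝ) ^ d ≤ (F.card : ℝ) * (k : ℝ) ^ d →
          (1 - δ') * (F.card : ℝ) ≤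
            (Set.ncard {c : Site d | c ∈ F ∧ wordAt x k c ∈ T} : ℝ) := by
  have hd0 : d ≠ 0 := Nat.one_le_iff_ne_zero.1 hd
  have hε : 0 < δ' * β / 6 ^ d := by positivity
  obtain ⟨φ, hφ, hφ0, hφi, hmean, hcount⟩ :=
    hμ.exists_entropy_typical hrate hA hd0 (lt_add_of_pos_right h hδ) hε
  rw [lt_div_iff₀' (by positivity)] at hmean
  obtain ⟨k0, hk0⟩ := eventually_atTop.1 (hcount.and (eventually_gt_atTop 0))
  refine ⟨k0, fun k hk => ⟨typicalWords φ k, (hk0 k hk).1, ?_⟩⟩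
  filter_upwards [hμ.ae_eventually_ncard_typical_ge hφ hφ0 hφi hδ'.le hmean (hk0 k hk).2] with x hx
  exact eventually_atTop.1 hx

end SRU1408
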